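/- arXiv:math/0009239 — 2 statements merged into one kernel-verified Lean document; each statement's English description precedes it below -/
import Mathlib

section
/- Let L be a Lie subalgebra of Vect_pol(E) that contains the Euler vector field ℰ. Then every ideal I of L is graded, i.e. I = ⊕_{p ≥ −1} (I ∩ Vect_p(E)). -/
/-!
The operator `ad ℰ` is diagonalizable on `Vect_pol(E)`: splitting the coefficients of a vector
field into homogeneous components writes it as a finite sum of eigenvectors
(`homogeneousPart_mem_VectP`, `exists_sum_homogeneousPart`), the degree `k` component being an
eigenvector for the eigenvalue `k - 1`; these eigenvalues are pairwise distinct in characteristic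
zero. An ideal `I` of `L` is stable under `ad ℰ` because `ℰ ∈ L`, and a subspace stable under an
endomorphism contains every term of a sum of eigenvectors with distinct eigenvalues as soon as it
contains the sum (`mem_of_sum_eigenvectors_mem`). Hence the homogeneous parts of an element of `I`
belong to `I`.
-/

open MvPolynomial

/-- The Lie algebra of polynomial vector fields on `E = 𝕜^n`, realized as the
derivations of the polynomial algebra `𝕜[x_1, …, x_n]`. -/
abbrev Vect (𝕜 : Type*) [Field 𝕜] (n : ℕ) : Type _ :=
  Derivation 𝕜 (MvPolynomial (Fin n) 𝕜) (MvPolynomial (Fin n) 𝕜)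

variable (𝕜 : Type*) [Field 𝕜] (n : ℕ)

/-- The Euler vector field `ℰ = Σ x^j ∂_j`. -/
noncomputable def euler : Vect 𝕜 n :=
  MvPolynomial.mkDerivation 𝕜 fun i => MvPolynomial.X i

/-- `Vect_p(E)`: the eigenspace of `ad(ℰ)` for the eigenvalue `p`, i.e. the vector fields
with homogeneous coefficients of degree `p+1`. -/
noncomputable def VectP (p : ℤ) : Submodule 𝕜 (Vect 𝕜 n) :=
  Module.End.eigenspace (LieAlgebra.ad 𝕜 (Vect 𝕜 n) (euler 𝕜 n)) ((p : 𝕜))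

/-- A Lie subalgebra `L` of `Vect_pol(E)` is graded if `L = ⊕_{p ≥ -1} (L ∩ Vect_p(E))`. -/
def IsGradedSubalg (L : LieSubalgebra 𝕜 (Vect 𝕜 n)) : Prop :=
  L.toSubmodule = ⨆ p ≥ (-1 : ℤ), (L.toSubmodule ⊓ VectP 𝕜 n p)

/-- A Lie subalgebra `L` of `Vect_pol(E)` is maximal if the only subalgebras containing it
are `L` itself and `Vect_pol(E)`. -/
def IsMaxSubalg (L : LieSubalgebra 𝕜 (Vect 𝕜 n)) : Prop :=
  ∀ L' : LieSubalgebra 𝕜 (Vect 𝕜 n), L ≤ L' → L' = L ∨ L' = ⊤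

/-- A stable subspace containing a sum of eigenvectors with distinct eigenvalues contains each of
them. By induction on the number of terms: applying `f - c a` kills the term of index `a` and
multiplies the others by nonzero scalars. -/
theorem mem_of_sum_eigenvectors_mem {K V ι : Type*} [Field K] [AddCommGroup V] [Module K V]
    (f : Module.End K V) (I : Submodule K V) (hI : ∀ x ∈ I, f x ∈ I)
    (c : ι → K) (hc : Function.Injective c) (s : Finset ι) :
    ∀ v : ι → V, (∀ i, f (v i) = c i • v i) → ∑ i ∈ s, v i ∈ I → ∀ i ∈ s, v i ∈ I := by
  classical
  induction s using Finset.induction_on with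
  | empty => simp
  | insert a s ha ih =>
    intro v hv hsum
    have key : ∑ i ∈ s, (c i - c a) • v i ∈ I := by
      have h := I.sub_mem (hI _ hsum) (I.smul_mem (c a) hsum)
      rw [Finset.sum_insert ha, map_add, map_sum, hv a, smul_add, Finset.smul_sum,
        add_sub_add_left_eq_sub, ← Finset.sum_sub_distrib] at h
      simpa only [hv, sub_smul] using h
    have hs : ∀ i ∈ s, v i ∈ I := by
      intro i hi
      have h := ih (fun i => (c i - c a) • v i)
        (fun i => by rw [map_smul, hv, smul_comm]) key i hi
      have hne : c i - c a ≠ 0 :=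
        sub_ne_zero.mpr fun h => ha (hc h ▸ hi)
      exact (I.smul_mem_iff hne).mp h
    intro i hi
    rcases Finset.mem_insert.mp hi with rfl | hi
    · rw [Finset.sum_insert ha] at hsum
      exact (I.add_mem_iff_left (I.sum_mem hs)).mp hsum
    · exact hs i hi

theorem derivation_sum_apply {𝕜 : Type*} [Field 𝕜] {n : ℕ} {ι : Type*} (s : Finset ι)
    (D : ι → Vect 𝕜 n) (φ : MvPolynomial (Fin n) 𝕜) :
    (∑ i ∈ s, D i) φ = ∑ i ∈ s, D i φ := by
  have h := map_sum (Derivation.coeFnAddMonoidHom : Vect 𝕜 n →+ _) D s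
  exact (congrFun h φ).trans (Finset.sum_apply _ _ _)

/-- The part of a vector field `D` whose coefficients are homogeneous of degree `k`. It lies in
`Vect_{k-1}(E)`. -/
noncomputable def homogeneousPart {𝕜 : Type*} [Field 𝕜] {n : ℕ} (D : Vect 𝕜 n) (k : ℕ) :
    Vect 𝕜 n :=
  MvPolynomial.mkDerivation 𝕜 fun i => homogeneousComponent k (D (X i))

theorem euler_apply_of_isHomogeneous {𝕜 : Type*} [Field 𝕜] {n : ℕ} {k : ℕ}
    {φ : MvPolynomial (Fin n) 𝕜} (h : φ.IsHomogeneous k) :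
    euler 𝕜 n φ = (k : 𝕜) • φ := by
  have he : euler 𝕜 n = ∑ i : Fin n, (X i : MvPolynomial (Fin n) 𝕜) • pderiv i := by
    refine derivation_ext fun j => ?_
    rw [euler, mkDerivation_X, derivation_sum_apply]
    simp [pderiv_X, Pi.single_apply]
  rw [he, derivation_sum_apply, Nat.cast_smul_eq_nsmul, ← h.sum_X_mul_pderiv]
  rfl

theorem ad_euler_homogeneousPart {𝕜 : Type*} [Field 𝕜] {n : ℕ} (D : Vect 𝕜 n) (k : ℕ) :
    LieAlgebra.ad 𝕜 (Vect 𝕜 n) (euler 𝕜 n) (homogeneousPart D k) =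
      (((k : ℤ) - 1 : ℤ) : 𝕜) • homogeneousPart D k := by
  refine derivation_ext fun j => ?_
  have hX : euler 𝕜 n (X j) = X j := mkDerivation_X _ _ _
  have hP : homogeneousPart D k (X j) = homogeneousComponent k (D (X j)) := mkDerivation_X _ _ _
  rw [LieAlgebra.ad_apply, Derivation.commutator_apply, hX, Derivation.smul_apply, hP,
    euler_apply_of_isHomogeneous (homogeneousComponent_isHomogeneous k _)]
  push_cast
  rw [sub_smul, one_smul]

theorem homogeneousPart_mem_VectP {𝕜 : Type*} [Field 𝕜] {n : ℕ} (D : Vect 𝕜 n) (k : ℕ) :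
    homogeneousPart D k ∈ VectP 𝕜 n ((k : ℤ) - 1) :=
  Module.End.mem_eigenspace_iff.mpr (ad_euler_homogeneousPart D k)

theorem exists_sum_homogeneousPart {𝕜 : Type*} [Field 𝕜] {n : ℕ} (D : Vect 𝕜 n) :
    ∃ N : ℕ, ∑ k ∈ Finset.range N, homogeneousPart D k = D := by
  -- `N` exceeds the total degree of every coefficient of `D`.
  refine ⟨(Finset.univ.sup fun i => (D (X i)).totalDegree) + 1, derivation_ext fun j => ?_⟩
  rw [derivation_sum_apply]
  simp only [homogeneousPart, mkDerivation_X]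
  have hle : (D (X j)).totalDegree ≤ Finset.univ.sup fun i => (D (X i)).totalDegree :=
    Finset.le_sup (f := fun i => (D (X i)).totalDegree) (Finset.mem_univ j)
  conv_rhs => rw [← sum_homogeneousComponent (D (X j))]
  refine (Finset.sum_subset (Finset.range_mono (by lia)) fun k _ hk => ?_).symm
  rw [Finset.mem_range] at hk
  exact homogeneousComponent_eq_zero _ _ (by lia)

/-- Let `L` be a Lie subalgebra of `Vect_pol(E)` containing the Euler vector field, and let
`I` be an ideal of `L` (a subspace of `L` with `⁅L, I⁆ ⊆ I`).  Then `I` is graded: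
`I = ⊕_{p ≥ -1} (I ∩ Vect_p(E))`. -/
theorem statement2 (𝕜 : Type) [RCLike 𝕜] (n : ℕ) (hn : 0 < n)
    (L : LieSubalgebra 𝕜 (Vect 𝕜 n)) (heuler : euler 𝕜 n ∈ L)
    (I : Submodule 𝕜 (Vect 𝕜 n)) (hIL : I ≤ L.toSubmodule)
    (hideal : ∀ x ∈ L, ∀ y ∈ I, ⁅x, y⁆ ∈ I) :
    I = ⨆ p ≥ (-1 : ℤ), (I ⊓ VectP 𝕜 n p) := by
  refine le_antisymm (fun D hD => ?_) (iSup₂_le fun p _ => inf_le_left)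
  obtain ⟨N, hN⟩ := exists_sum_homogeneousPart D
  have hmem : ∀ k ∈ Finset.range N, homogeneousPart D k ∈ I :=
    mem_of_sum_eigenvectors_mem (LieAlgebra.ad 𝕜 (Vect 𝕜 n) (euler 𝕜 n)) I
      (fun y hy => hideal _ heuler y hy) (fun k : ℕ => (((k : ℤ) - 1 : ℤ) : 𝕜))
      (fun a b h => by simpa using h) _ _ (ad_euler_homogeneousPart D) (hN.symm ▸ hD)
  rw [← hN]
  refine Submodule.sum_mem _ fun k hk => ?_
  exact Submodule.mem_iSup_of_mem ((k : ℤ) - 1) <|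
    Submodule.mem_iSup_of_mem (by lia) ⟨hmem k hk, homogeneousPart_mem_VectP D k⟩
end

section
/- Let F be a vector subspace of Vect_{−1}(E) and for i ≥ −1 set n_i(F) = {X ∈ Vect_i(E) : ad(F)^{i+1} X ⊆ F}, i.e. all iterated brackets [h_1,[h_2,[...,[h_{i+1}, X]...]]] with h_1,...,h_{i+1} ∈ F lie in F (so n_{−1}(F) = F). Then [n_i(F), n_j(F)] ⊆ n_{i+j}(F) for all i, j ≥ −1; consequently N(F) = ⊕_{i ≥ −1} n_i(F) is a graded Lie subalgebra of Vect_pol(E). -/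
/-! Bracketing with an element of `F` is a derivation of the Lie algebra, so an iterated bracket
with `⁅X, Y⁆` reduces to iterated brackets with `⁅⁅h, X⁆, Y⁆` and `⁅X, ⁅h, Y⁆⁆`. If `a` brackets
with elements of `F` send `X` into `F`, and `b` send `Y` into `F`, induction on `a + b` shows that
`a + b - 1` send `⁅X, Y⁆` into `F` as soon as `a + b ≥ 1` (`Absorbed.lie`): the base case is
`X ∈ F` or `Y ∈ F`, where the bracket with `X` (or `Y`) counts as one more bracket with an
element of `F`.

With `a = i + 1`, `b = j + 1` this is the claim, except for `i = j = -1`. In that case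
`⁅X, Y⁆ = 0`, since the vector fields in `Vect_{-1}(E)` have constant coefficients
(`lie_eq_zero_of_mem_VectP_neg_one`). -/

open MvPolynomial

variable (𝕜 : Type*) [Field 𝕜] (n : ℕ)

/-- The iterated adjoint action along a list: `iterAd [h₁, …, h_m] X = ⁅h₁, ⁅h₂, …, ⁅h_m, X⁆…⁆⁆`. -/
noncomputable def iterAd (l : List (Vect 𝕜 n)) : Module.End 𝕜 (Vect 𝕜 n) :=
  (l.map fun h => LieAlgebra.ad 𝕜 (Vect 𝕜 n) h).prod

/-- `n_i(F) = {X ∈ Vect_i(E) : ad(F)^{i+1} X ⊆ F}`: all iterated brackets of `X` with `i+1`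
elements of `F` lie in `F`. -/
noncomputable def nF (F : Submodule 𝕜 (Vect 𝕜 n)) (i : ℤ) : Submodule 𝕜 (Vect 𝕜 n) where
  carrier := {X | X ∈ VectP 𝕜 n i ∧
    ∀ l : List (Vect 𝕜 n), (∀ h ∈ l, h ∈ F) → l.length = (i + 1).toNat →
      iterAd 𝕜 n l X ∈ F}
  add_mem' := by
    rintro a b ⟨ha1, ha2⟩ ⟨hb1, hb2⟩
    refine ⟨add_mem ha1 hb1, fun l hl hlen => ?_⟩
    rw [map_add]
    exact add_mem (ha2 l hl hlen) (hb2 l hl hlen)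
  zero_mem' := ⟨zero_mem _, fun l hl hlen => by rw [map_zero]; exact zero_mem F⟩
  smul_mem' := by
    rintro c a ⟨ha1, ha2⟩
    refine ⟨Submodule.smul_mem _ c ha1, fun l hl hlen => ?_⟩
    rw [map_smul]
    exact Submodule.smul_mem F c (ha2 l hl hlen)

/-- `a` successive brackets with elements of `F` send `X` into `F`. -/
def Absorbed (F : Submodule 𝕜 (Vect 𝕜 n)) (a : ℕ) (X : Vect 𝕜 n) : Prop :=
  ∀ l : List (Vect 𝕜 n), (∀ h ∈ l, h ∈ F) → l.length = a → iterAd 𝕜 n l X ∈ F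

section Helpers

variable {𝕜 : Type*} [Field 𝕜] {n : ℕ}

-- The Lie module lemmas `zero_lie`, `lie_zero`, `smul_lie`, `lie_smul` do not rewrite brackets of
-- derivations (the instances differ up to unfolding), hence these versions for `Vect 𝕜 n`.
lemma vect_zero_lie (Y : Vect 𝕜 n) : ⁅(0 : Vect 𝕜 n), Y⁆ = 0 := by
  ext i
  simp [Derivation.commutator_apply]

lemma vect_lie_zero (X : Vect 𝕜 n) : ⁅X, (0 : Vect 𝕜 n)⁆ = 0 := by
  ext i
  simp [Derivation.commutator_apply]

lemma vect_smul_lie (c : 𝕜) (X Y : Vect 𝕜 n) : ⁅c • X, Y⁆ = c • ⁅X, Y⁆ := by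
  ext i
  simp [Derivation.commutator_apply, smul_sub]

lemma vect_lie_smul (c : 𝕜) (X Y : Vect 𝕜 n) : ⁅X, c • Y⁆ = c • ⁅X, Y⁆ := by
  ext i
  simp [Derivation.commutator_apply, smul_sub]

lemma iterAd_concat (l : List (Vect 𝕜 n)) (h X : Vect 𝕜 n) :
    iterAd 𝕜 n (l ++ [h]) X = iterAd 𝕜 n l ⁅h, X⁆ := by
  simp [iterAd]

lemma mem_nF {F : Submodule 𝕜 (Vect 𝕜 n)} {i : ℤ} {X : Vect 𝕜 n} :
    X ∈ nF 𝕜 n F i ↔ X ∈ VectP 𝕜 n i ∧ Absorbed 𝕜 n F (i + 1).toNat X :=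
  Iff.rfl

lemma Absorbed.mem {F : Submodule 𝕜 (Vect 𝕜 n)} {X : Vect 𝕜 n} (hX : Absorbed 𝕜 n F 0 X) :
    X ∈ F := by
  simpa [iterAd] using hX [] (by simp) rfl

lemma Absorbed.lie_left {F : Submodule 𝕜 (Vect 𝕜 n)} {a : ℕ} {h X : Vect 𝕜 n}
    (hX : Absorbed 𝕜 n F (a + 1) X) (hh : h ∈ F) : Absorbed 𝕜 n F a ⁅h, X⁆ := by
  intro l hl hlen
  rw [← iterAd_concat]
  refine hX _ (fun g hg => ?_) (by simp [hlen])
  rcases List.mem_append.1 hg with hg | hg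
  · exact hl g hg
  · rw [List.mem_singleton.1 hg]
    exact hh

/-- The inductive core: if `a` brackets absorb `X` into `F` and `b` brackets absorb `Y`, then
`c = a + b - 1` brackets absorb `⁅X, Y⁆`. The excluded case `a + b = 0` is the bracket of two
elements of `F`. -/
lemma Absorbed.lie {F : Submodule 𝕜 (Vect 𝕜 n)} (c : ℕ) :
    ∀ (a b : ℕ) (X Y : Vect 𝕜 n), a + b = c + 1 → Absorbed 𝕜 n F a X → Absorbed 𝕜 n F b Y →
      Absorbed 𝕜 n F c ⁅X, Y⁆ := by
  induction c with
  | zero =>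
    intro a b X Y hab hX hY
    rcases a with _ | a
    · obtain rfl : b = 0 + 1 := by omega
      exact hY.lie_left hX.mem
    · obtain ⟨rfl, rfl⟩ : a = 0 ∧ b = 0 := by omega
      intro l hl hlen
      rw [← lie_skew, map_neg]
      exact neg_mem (hX.lie_left hY.mem l hl hlen)
  | succ c ih =>
    intro a b X Y hab hX hY
    rcases a with _ | a
    · obtain rfl : b = c + 1 + 1 := by omega
      exact hY.lie_left hX.mem
    rcases b with _ | b
    · obtain rfl : a = c + 1 := by omega
      intro l hl hlen
      rw [← lie_skew, map_neg]
      exact neg_mem (hX.lie_left hY.mem l hl hlen)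
    intro l hl hlen
    -- Peel off the innermost bracket, which is the last entry of the list.
    rcases List.eq_nil_or_concat' l with rfl | ⟨l, h, rfl⟩
    · simp at hlen
    have hh : h ∈ F := hl h (by simp)
    have hl' : ∀ g ∈ l, g ∈ F := fun g hg => hl g (by simp [hg])
    have hlen' : l.length = c := by simpa using hlen
    rw [iterAd_concat, LieRing.leibniz_lie, map_add]
    exact add_mem (ih a (b + 1) _ _ (by omega) (hX.lie_left hh) hY l hl' hlen')
      (ih (a + 1) b _ _ (by omega) hX (hY.lie_left hh) l hl' hlen')

lemma mem_VectP {p : ℤ} {X : Vect 𝕜 n} : X ∈ VectP 𝕜 n p ↔ ⁅euler 𝕜 n, X⁆ = (p : 𝕜) • X := by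
  simp [VectP]

lemma lie_mem_VectP {i j : ℤ} {X Y : Vect 𝕜 n} (hX : X ∈ VectP 𝕜 n i) (hY : Y ∈ VectP 𝕜 n j) :
    ⁅X, Y⁆ ∈ VectP 𝕜 n (i + j) := by
  rw [mem_VectP] at *
  rw [LieRing.leibniz_lie, hX, hY, vect_smul_lie, vect_lie_smul, ← add_smul, Int.cast_add]

/-- The Euler field multiplies the coefficient of a monomial by its total degree. -/
lemma coeff_euler (f : MvPolynomial (Fin n) 𝕜) (m : Fin n →₀ ℕ) :
    coeff m (euler 𝕜 n f) = (m.degree : 𝕜) * coeff m f := by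
  induction f using MvPolynomial.induction_on' with
  | monomial u a =>
    have key : euler 𝕜 n (monomial u a) = (u.degree : 𝕜) • monomial u a := by
      rw [euler, mkDerivation_monomial, Finsupp.sum, Finsupp.degree_apply, Nat.cast_sum,
        Finset.sum_smul, Finset.smul_sum]
      refine Finset.sum_congr rfl fun i hi => ?_
      have hu : u - Finsupp.single i 1 + Finsupp.single i 1 = u :=
        tsub_add_cancel_of_le (by
          simpa [Nat.one_le_iff_ne_zero] using hi)
      rw [smul_eq_mul, X, monomial_mul, hu, smul_monomial, smul_monomial]
      simp [mul_comm]
    rw [key, coeff_smul, smul_eq_mul, coeff_monomial]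
    split_ifs with h
    · rw [h]
    · simp
  | add p q hp hq => rw [map_add, coeff_add, coeff_add, hp, hq, mul_add]

lemma exists_apply_X_eq_C [CharZero 𝕜] {Z : Vect 𝕜 n} (hZ : Z ∈ VectP 𝕜 n (-1)) (i : Fin n) :
    ∃ c : 𝕜, Z (X i) = C c := by
  have h := congrArg (fun D : Vect 𝕜 n => D (X i)) (mem_VectP.1 hZ)
  have hE : euler 𝕜 n (X i) = X i := by simp [euler]
  have h0 : euler 𝕜 n (Z (X i)) = 0 := by
    simpa [Derivation.commutator_apply, hE, sub_eq_iff_eq_add] using h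
  refine ⟨coeff 0 (Z (X i)), MvPolynomial.ext _ _ fun m => ?_⟩
  rw [coeff_C]
  split_ifs with hm
  · rw [hm]
  · have h1 := coeff_euler (Z (X i)) m
    rw [h0, coeff_zero, eq_comm, mul_eq_zero, Nat.cast_eq_zero, Finsupp.degree_eq_zero_iff] at h1
    exact h1.resolve_left fun h => hm h.symm

lemma lie_eq_zero_of_mem_VectP_neg_one [CharZero 𝕜] {Y Z : Vect 𝕜 n}
    (hY : Y ∈ VectP 𝕜 n (-1)) (hZ : Z ∈ VectP 𝕜 n (-1)) : ⁅Y, Z⁆ = 0 := by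
  refine MvPolynomial.derivation_ext fun i => ?_
  obtain ⟨c, hc⟩ := exists_apply_X_eq_C hY i
  obtain ⟨d, hd⟩ := exists_apply_X_eq_C hZ i
  rw [Derivation.commutator_apply, hc, hd, derivation_C, derivation_C]
  simp

lemma lie_mem_nF [CharZero 𝕜] {F : Submodule 𝕜 (Vect 𝕜 n)} {i j : ℤ} (hi : -1 ≤ i) (hj : -1 ≤ j)
    {X Y : Vect 𝕜 n} (hX : X ∈ nF 𝕜 n F i) (hY : Y ∈ nF 𝕜 n F j) : ⁅X, Y⁆ ∈ nF 𝕜 n F (i + j) := by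
  rw [mem_nF] at hX hY
  by_cases h : i = -1 ∧ j = -1
  · obtain ⟨rfl, rfl⟩ := h
    rw [lie_eq_zero_of_mem_VectP_neg_one hX.1 hY.1]
    exact zero_mem _
  · exact mem_nF.2 ⟨lie_mem_VectP hX.1 hY.1,
      Absorbed.lie _ _ _ X Y (by omega) hX.2 hY.2⟩

lemma lie_mem_iSup_nF [CharZero 𝕜] {F : Submodule 𝕜 (Vect 𝕜 n)} {X Y : Vect 𝕜 n}
    (hX : X ∈ ⨆ i ≥ (-1 : ℤ), nF 𝕜 n F i) (hY : Y ∈ ⨆ i ≥ (-1 : ℤ), nF 𝕜 n F i) :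
    ⁅X, Y⁆ ∈ ⨆ i ≥ (-1 : ℤ), nF 𝕜 n F i := by
  rw [iSup_subtype'] at hX hY
  induction hX using Submodule.iSup_induction' with
  | zero => rw [vect_zero_lie]; exact zero_mem _
  | add X X' _ _ h h' => rw [LieRing.add_lie]; exact add_mem h h'
  | mem i X hX =>
    induction hY using Submodule.iSup_induction' with
    | zero => rw [vect_lie_zero]; exact zero_mem _
    | add Y Y' _ _ h h' => rw [LieRing.lie_add]; exact add_mem h h'
    | mem j Y hY =>
      have hi : -1 ≤ i.1 := i.2
      have hj : -1 ≤ j.1 := j.2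
      by_cases h : i.1 = -1 ∧ j.1 = -1
      · -- Here `i + j = -2` is not one of the indices of the supremum.
        rw [lie_eq_zero_of_mem_VectP_neg_one (h.1 ▸ hX.1) (h.2 ▸ hY.1)]
        exact zero_mem _
      · have hij : i.1 + j.1 ≥ -1 := by omega
        exact Submodule.mem_iSup_of_mem _ (Submodule.mem_iSup_of_mem hij (lie_mem_nF hi hj hX hY))

end Helpers

/-- For a subspace `F ⊆ Vect₋₁(E)` one has `[n_i(F), n_j(F)] ⊆ n_{i+j}(F)` for all
`i, j ≥ -1`; consequently `N(F) = ⊕_{i ≥ -1} n_i(F)` is a graded Lie subalgebra of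
`Vect_pol(E)`. -/
theorem statement4 (𝕜 : Type) [RCLike 𝕜] (n : ℕ) (hn : 0 < n)
    (F : Submodule 𝕜 (Vect 𝕜 n)) (hF : F ≤ VectP 𝕜 n (-1)) :
    (∀ i j : ℤ, -1 ≤ i → -1 ≤ j →
      ∀ X ∈ nF 𝕜 n F i, ∀ Y ∈ nF 𝕜 n F j, ⁅X, Y⁆ ∈ nF 𝕜 n F (i + j)) ∧
    ∃ N : LieSubalgebra 𝕜 (Vect 𝕜 n),
      (N.toSubmodule = ⨆ i ≥ (-1 : ℤ), nF 𝕜 n F i) ∧ IsGradedSubalg 𝕜 n N := by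
  refine ⟨fun i j hi hj X hX Y hY => lie_mem_nF hi hj hX hY,
    { (⨆ i ≥ (-1 : ℤ), nF 𝕜 n F i) with lie_mem' := lie_mem_iSup_nF }, rfl, ?_⟩
  refine le_antisymm ?_ (iSup₂_le fun p _ => inf_le_left)
  exact iSup₂_mono fun p hp =>
    le_inf (le_iSup₂ (f := fun i (_ : i ≥ (-1 : ℤ)) => nF 𝕜 n F i) p hp) fun X hX => hX.1
end
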